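/- arXiv:2408.00514 — 3 statements merged into one kernel-verified Lean document; each statement's English description precedes it below -/
import Mathlib

section
/- Let E be an elementary topos with subobject classifier Ω. A morphism f : W → X in E is internally orthogonal to Ω (i.e., Ω^f : Ω^X → Ω^W is an isomorphism) if and only if f is an isomorphism. Equivalently, the functor Ω^(−) : E^op → E reflects isomorphisms. -/
open CategoryTheory Category Limits MonoidalCategory

universe u v

/-- A subobject classifier for a category with a (chosen) terminal object: an object `Ω`
together with `truth : 1 ⟶ Ω` such that every monomorphism is the pullback of `truth`
along a unique classifying map. -/
structure Classifier (E : Type u) [Category.{v} E] [CartesianMonoidalCategory E] where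
  Ω : E
  truth : 𝟙_ E ⟶ Ω
  classifies : ∀ {U X : E} (m : U ⟶ X), Mono m →
    ∃! χ : X ⟶ Ω, IsPullback (CartesianMonoidalCategory.toUnit U) m truth χ

/-!
Maps `T ⟶ Ω^X` are maps `X ⊗ T ⟶ Ω`, so `Ω^f` is invertible exactly when every `f ▷ T` induces a
bijection on maps into `Ω`. Surjectivity makes `f` a monomorphism: the characteristic map of the
graph of a generalized element `a : T ⟶ W` factors through `f ▷ T`, and therefore cannot
distinguish `a` from any `b` with `b ≫ f = a ≫ f`. Injectivity at `T = 1` then forces the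
characteristic map of the subobject `f` to be constantly true, so that `f` is invertible.
-/

section Monoidal

variable {C : Type u} [Category.{v} C] [MonoidalCategory C] {W X : C}

theorem isIso_pre_app_iff_bijective_whiskerRight_comp [Closed W] [Closed X] (f : W ⟶ X) (Z : C) :
    IsIso ((MonoidalClosed.pre f).app Z) ↔
      ∀ T : C, Function.Bijective fun g : X ⊗ T ⟶ Z ↦ f ▷ T ≫ g := by
  rw [isIso_iff_yoneda_map_bijective]
  refine forall_congr' fun T ↦ ?_
  let curryX := (ihom.adjunction X).homEquiv T Z
  let curryW := (ihom.adjunction W).homEquiv T Z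
  have curry_comp_pre : (fun k ↦ k ≫ (MonoidalClosed.pre f).app Z) ∘ curryX =
      curryW ∘ fun g ↦ f ▷ T ≫ g :=
    funext fun g ↦ MonoidalClosed.curry_pre_app f g
  rw [← curryX.bijective_comp, curry_comp_pre, curryW.comp_bijective]

theorem injective_comp_of_injective_whiskerRight_unit_comp {f : W ⟶ X} {Z : C}
    (hf : Function.Injective fun g : X ⊗ 𝟙_ C ⟶ Z ↦ f ▷ 𝟙_ C ≫ g) :
    Function.Injective fun g : X ⟶ Z ↦ f ≫ g := by
  intro g g' (h : f ≫ g = f ≫ g')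
  have h_unit : (ρ_ X).hom ≫ g = (ρ_ X).hom ≫ g' :=
    hf (by simp only [rightUnitor_naturality_assoc, h])
  exact (cancel_epi _).1 h_unit

end Monoidal

section Cartesian

open CartesianMonoidalCategory

variable {E : Type u} [Category.{v} E] [CartesianMonoidalCategory E]

theorem mono_lift_id {T W : E} (a : T ⟶ W) : Mono (lift a (𝟙 T)) :=
  mono_of_mono_fac (lift_snd a (𝟙 T))

theorem eq_of_isPullback_lift_id {T W P Q : E} {a b : T ⟶ W} {p : T ⟶ P} {q : P ⟶ Q}
    {χ : W ⊗ T ⟶ Q} (graph : IsPullback p (lift a (𝟙 T)) q χ)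
    (h : lift a (𝟙 T) ≫ χ = lift b (𝟙 T) ≫ χ) : a = b := by
  obtain ⟨s, -, hs⟩ := graph.exists_lift p (lift b (𝟙 T)) (graph.w.trans h)
  have hs_snd : s = 𝟙 T := by simpa using hs =≫ snd W T
  simpa [hs_snd] using hs =≫ fst W T

namespace Classifier

variable (c : _root_.Classifier E) {W X : E} {f : W ⟶ X}

theorem mono_of_surjective_whiskerRight_comp
    (hf : ∀ T : E, Function.Surjective fun g : X ⊗ T ⟶ c.Ω ↦ f ▷ T ≫ g) : Mono f where
  right_cancellation {T} a b hab := by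
    obtain ⟨χ, graph, -⟩ := c.classifies (lift a (𝟙 T)) (mono_lift_id a)
    obtain ⟨ψ, rfl : f ▷ T ≫ ψ = χ⟩ := hf T χ
    exact eq_of_isPullback_lift_id graph (by simp only [lift_whiskerRight_assoc, hab])

theorem isIso_of_mono_of_injective_comp [Mono f]
    (hf : Function.Injective fun g : X ⟶ c.Ω ↦ f ≫ g) : IsIso f := by
  obtain ⟨χ, hχ, -⟩ := c.classifies f inferInstance
  have hχ_true : toUnit X ≫ c.truth = χ := by
    refine hf ?_
    change f ≫ toUnit X ≫ c.truth = f ≫ χ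
    rw [comp_toUnit_assoc, hχ.w]
  obtain ⟨s, -, hs⟩ := hχ.exists_lift (toUnit X) (𝟙 X) (by rw [hχ_true, id_comp])
  have : IsSplitEpi f := ⟨⟨s, hs⟩⟩
  exact isIso_of_mono_of_isSplitEpi f

end Classifier

theorem internallyOrthogonal_classifier_iff_isIso_general (c : _root_.Classifier E) {W X : E}
    [Closed W] [Closed X] (f : W ⟶ X) :
    IsIso ((MonoidalClosed.pre f).app c.Ω) ↔ IsIso f := by
  rw [isIso_pre_app_iff_bijective_whiskerRight_comp]
  constructor
  · intro hf
    have : Mono f := c.mono_of_surjective_whiskerRight_comp fun T ↦ (hf T).surjective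
    exact c.isIso_of_mono_of_injective_comp
      (injective_comp_of_injective_whiskerRight_unit_comp (hf (𝟙_ E)).injective)
  · intro _ T
    exact (asIso (f ▷ T)).homFromEquiv.symm.bijective

end Cartesian

/-- In an elementary topos `E` with subobject classifier `Ω`, a morphism
`f : W ⟶ X` is internally orthogonal to `Ω` (i.e. `Ω^f : Ω^X ⟶ Ω^W` is an isomorphism)
if and only if `f` is an isomorphism; equivalently, `Ω^(−) : Eᵒᵖ ⥤ E` reflects isos. -/
theorem internallyOrthogonal_classifier_iff_isIso
    {E : Type u} [Category.{v} E] [HasFiniteLimits E] [CartesianMonoidalCategory E]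
    [MonoidalClosed E] (c : _root_.Classifier E) {W X : E} (f : W ⟶ X) :
    IsIso ((MonoidalClosed.pre f).app c.Ω) ↔ IsIso f :=
  internallyOrthogonal_classifier_iff_isIso_general c f
end

section
/- Let p : E → S be a pre-cohesive geometric morphism between elementary toposes, let 2 be the subobject classifier of S, and let F be the least subtopos of E containing p^* 2, with reflector L_F : E → F. Then a monomorphism u : U → X in E is F-dense (i.e., L_F u is an isomorphism) if and only if for every pullback square in E with u on one side and v : V → Y as the pulled-back monomorphism, the morphism p_! v is an isomorphism in S. -/
open CategoryTheory Category Limits MonoidalCategory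

universe u v u' v' u₂ v₂

/-!
Fix `Z`. The truth values `ω` such that every partial map to `Z` defined on the extent of `ω`
extends uniquely to a total map, at every later stage, are described by a formula of the internal
logic. They form the largest Lawvere–Tierney topology for which `Z` is a sheaf; its dense
monomorphisms are those all of whose pullbacks are orthogonal to `Z`. The sheaves of this topology
are the least subtopos containing `Z`, because the monomorphisms inverted by a left exact
reflection whose image contains `Z` have all their pullbacks orthogonal to `Z`.

For `Z = p^* Ω`, a map `v : V ⟶ Y` is orthogonal to `Z` if and only if `p_! v` is orthogonal to `Ω`.
Asking this of all pullbacks `v` of `u` includes the products `V × v`. Since `p_!` preserves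
products, the classifier of the diagonal of `p_! V` shows that `p_! v` is monic, and then its own
classifier shows that it is invertible.
-/

section Localization

lemma universally_of_precomp {C : Type u} [Category.{v} C] [HasPullbacks C]
    {W : MorphismProperty C} [W.HasOfPrecompProperty W] {X Y Z : C} {f : X ⟶ Y} {g : Y ⟶ Z}
    (hf : W.universally f) (hfg : W.universally (f ≫ g)) : W.universally g := fun _ _ a _ g' sq =>
  have sq' := (IsPullback.of_hasPullback f a).flip
  W.of_precomp _ g' (hf _ _ _ sq') (hfg _ _ _ (sq'.paste_horiz sq))

lemma isStableUnderBaseChange_inverseImage_isomorphisms {C : Type u} [Category.{v} C] {D : Type u'}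
    [Category.{v'} D] (L : C ⥤ D) [PreservesLimitsOfShape WalkingCospan L] :
    ((MorphismProperty.isomorphisms D).inverseImage L).IsStableUnderBaseChange where
  of_isPullback sq hg := MorphismProperty.of_isPullback (P := .isomorphisms D) (sq.map L) hg

lemma mem_pullbackMap {C : Type u} [Category.{v} C] [HasPullbacks C] {W : MorphismProperty C}
    [W.IsStableUnderBaseChange] [W.HasTwoOutOfThreeProperty] [W.IsMultiplicative]
    {X Y S X' Y' S' : C} {f : X ⟶ S} {g : Y ⟶ S} {f' : X' ⟶ S'} {g' : Y' ⟶ S'}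
    {i₁ : X ⟶ X'} {i₂ : Y ⟶ Y'} {i₃ : S ⟶ S'} (hi₁ : W i₁) (hi₂ : W i₂) (hi₃ : W i₃)
    (hf : f ≫ i₃ = i₁ ≫ f') (hg : g ≫ i₃ = i₂ ≫ g') :
    W (pullback.map f g f' g' i₁ i₂ i₃ hf hg) := by
  have diagonal : W (pullback.diagonal i₃) := by
    refine W.of_postcomp _ (pullback.fst i₃ i₃) (W.pullback_fst _ _ hi₃) ?_
    rw [pullback.diagonal_fst]
    exact W.id_mem S
  have changeBase := W.of_isPullback (pullback_map_diagonal_isPullback f g i₃) diagonal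
  have changeObjects := MorphismProperty.pullbackMap (P := W) hi₁ hi₂ hf hg
  simpa only [pullback.map_comp, id_comp, comp_id] using
    W.comp_mem _ _ changeBase changeObjects

variable {C : Type u} [Category.{v} C] {D : Type u₂} [Category.{v₂} D] {L : C ⥤ D} {R : D ⥤ C}

-- The equalizer of two maps identified by `L` is an `L`-dense subobject.
lemma mono_unit_app_of_isLocal (adj : L ⊣ R) [HasEqualizers C]
    [PreservesLimitsOfShape WalkingParallelPair L] {A : C}
    (hA : (MorphismProperty.monomorphisms C ⊓
      (MorphismProperty.isomorphisms D).inverseImage L).isLocal A) :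
    Mono (adj.unit.app A) where
  right_cancellation f g h := by
    have map_eq : L.map f = L.map g := by
      refine (adj.homEquiv _ _).injective ?_
      rw [adj.homEquiv_unit, adj.homEquiv_unit, adj.unit_naturality, adj.unit_naturality]
      exact h
    have : IsIso (L.map (equalizer.ι f g)) :=
      isIso_limit_cone_parallelPair_of_eq map_eq (isLimitOfHasEqualizerOfPreservesLimit L f g)
    exact (hA _ ⟨inferInstanceAs (Mono _), this⟩).1 (equalizer.condition f g)

variable [R.Full] [R.Faithful]

lemma isLocal_essImage_iff (adj : L ⊣ R) {X Y : C} (f : X ⟶ Y) :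
    R.essImage.isLocal f ↔ IsIso (L.map f) := by
  rw [← ObjectProperty.isLocal_iff_isIso_map adj]
  refine ⟨fun hf _ ⟨Z, hZ⟩ => hf _ ⟨Z, ⟨eqToIso hZ⟩⟩, ?_⟩
  rw [← ObjectProperty.isoClosure_isLocal]
  exact fun hf Z ⟨A, ⟨e⟩⟩ => hf Z ⟨_, ⟨A, rfl⟩, ⟨e.symm⟩⟩

lemma isLocal_inverseImage_obj (adj : L ⊣ R) (Z : D) :
    ((MorphismProperty.isomorphisms D).inverseImage L).isLocal (R.obj Z) := fun _ _ f hf =>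
  (isLocal_essImage_iff adj f).2 hf _ (R.obj_mem_essImage Z)

lemma isPullback_map_pullback (adj : L ⊣ R) [HasPullbacks C]
    [((MorphismProperty.isomorphisms D).inverseImage L).IsStableUnderBaseChange]
    {X Y S : C} (f : X ⟶ S) (g : Y ⟶ S) :
    IsPullback (L.map (pullback.fst f g)) (L.map (pullback.snd f g)) (L.map f) (L.map g) := by
  let W := (MorphismProperty.isomorphisms D).inverseImage L
  have unit_mem (A : C) : W (adj.unit.app A) := inferInstanceAs (IsIso (L.map (adj.unit.app A)))
  have sq : CommSq (R.map (L.map (pullback.fst f g))) (R.map (L.map (pullback.snd f g)))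
      (R.map (L.map f)) (R.map (L.map g)) := by
    constructor
    simp only [← Functor.map_comp, pullback.condition]
  let e := pullback.lift _ _ sq.w
  have unit_comp_e : adj.unit.app (pullback f g) ≫ e =
      pullback.map _ _ _ _ (adj.unit.app X) (adj.unit.app Y) (adj.unit.app S)
        (adj.unit.naturality f) (adj.unit.naturality g) := by
    refine pullback.hom_ext ?_ ?_ <;> rw [assoc]
    · exact (congrArg (_ ≫ ·) (pullback.lift_fst _ _ _)).trans
        ((adj.unit.naturality _).symm.trans (pullback.lift_fst _ _ _).symm)
    · exact (congrArg (_ ≫ ·) (pullback.lift_snd _ _ _)).trans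
        ((adj.unit.naturality _).symm.trans (pullback.lift_snd _ _ _).symm)
  have he : W e := W.of_precomp _ _ (unit_mem _) <| by
    rw [unit_comp_e]
    exact mem_pullbackMap (unit_mem X) (unit_mem Y) (unit_mem S) _ _
  have isLocal_pullback : W.isLocal (pullback (R.map (L.map f)) (R.map (L.map g))) :=
    ObjectProperty.prop_limit _ _ (by rintro (_ | _ | _) <;> exact isLocal_inverseImage_obj adj _)
  have : IsIso e := (W.isLocal.isLocal_iff_isIso e (isLocal_inverseImage_obj adj _)
    isLocal_pullback).1 (W.le_isLocal_isLocal _ he)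
  have isPullback_R := IsPullback.of_iso_pullback sq (asIso e) (pullback.lift_fst _ _ _)
    (pullback.lift_snd _ _ _)
  exact isPullback_R.of_map R (by simp only [← Functor.map_comp, pullback.condition])

lemma preservesFiniteLimits_of_isStableUnderBaseChange (adj : L ⊣ R) [HasFiniteLimits C]
    [((MorphismProperty.isomorphisms D).inverseImage L).IsStableUnderBaseChange] :
    PreservesFiniteLimits L := by
  have : PreservesLimitsOfShape WalkingCospan L :=
    preservesLimitsOfShape_walkingCospan_of_forall_isPullback fun _ _ _ f g _ =>
      ⟨_, _, _, .of_hasPullback f g, isPullback_map_pullback adj f g⟩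
  let _ : Reflective R := ⟨L, adj⟩
  have : PreservesLimitsOfShape (Discrete PEmpty) L := leftAdjoint_preservesTerminal_of_reflective R
  exact preservesFiniteLimits_of_preservesTerminal_and_pullbacks L

variable (R) in
lemma exists_leftAdjoint
    (h : ∀ A : C, ∃ (B : D) (η : A ⟶ R.obj B), R.essImage.isLocal η) :
    ∃ L : C ⥤ D, Nonempty (L ⊣ R) := by
  choose B η hη using h
  let e (A : C) (X : D) : (B A ⟶ X) ≃ (A ⟶ R.obj X) :=
    (Functor.FullyFaithful.ofFullyFaithful R).homEquiv.trans
      ((hη A).homEquiv _ (R.obj_mem_essImage X))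
  exact ⟨_, ⟨Adjunction.adjunctionOfEquivLeft e fun A X Y f g => by simp [e]⟩⟩

lemma isIso_unit_app_of_isLocal (adj : L ⊣ R) [HasEqualizers C]
    [PreservesLimitsOfShape WalkingParallelPair L] {A : C}
    (hA : (MorphismProperty.monomorphisms C ⊓
      (MorphismProperty.isomorphisms D).inverseImage L).isLocal A) :
    IsIso (adj.unit.app A) := by
  obtain ⟨r, hr⟩ := (hA (adj.unit.app A)
    ⟨mono_unit_app_of_isLocal adj hA, inferInstanceAs (IsIso (L.map _))⟩).2 (𝟙 A)
  let _ : Reflective R := ⟨L, adj⟩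
  have : IsSplitMono ((reflectorAdjunction R).unit.app A) := ⟨⟨r, hr⟩⟩
  exact adj.isIso_unit_app_iff_mem_essImage.2 mem_essImage_of_unit_isSplitMono

end Localization

open CartesianMonoidalCategory
open MonoidalClosed (curry uncurry curry_natural_left curry_injective curry_uncurry)

lemma isPullback_whiskerLeft {E : Type u} [Category.{v} E] [CartesianMonoidalCategory E]
    (A : E) {X Y : E} (f : X ⟶ Y) : IsPullback (snd A X) (A ◁ f) f (snd A Y) where
  w := (whiskerLeft_snd A f).symm
  isLimit' := ⟨PullbackCone.IsLimit.mk _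
    (fun s => lift (s.snd ≫ fst A Y) s.fst)
    (fun s => lift_snd _ _)
    (fun s => by
      rw [lift_whiskerLeft, s.condition, ← comp_lift, lift_fst_snd, comp_id])
    (fun s l hfst hsnd => by
      ext
      · rw [lift_fst, ← hsnd, assoc, whiskerLeft_fst]
      · rw [lift_snd, hfst])⟩

namespace Classifier

section Forcing

variable {E : Type u} [Category.{v} E] [CartesianMonoidalCategory E] (c : _root_.Classifier E)

/-- Kripke–Joyal forcing: the proposition `ω`, at stage `T`, is true. -/
def Holds {T : E} (ω : T ⟶ c.Ω) : Prop :=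
  ω = toUnit T ≫ c.truth

/-- The formula `χ` on `X` expresses, at every stage, the external condition `P` on generalized
elements of `X`. -/
def Represents {X : E} (χ : X ⟶ c.Ω) (P : Presieve X) : Prop :=
  ∀ ⦃T : E⦄ (t : T ⟶ X), c.Holds (t ≫ χ) ↔ P t

/-- The condition `P` on generalized elements of `X` is expressible in the internal logic. -/
def IsRepresentable {X : E} (P : Presieve X) : Prop :=
  ∃ χ : X ⟶ c.Ω, c.Represents χ P

variable {c}

lemma Holds.precomp {T T' : E} {ω : T ⟶ c.Ω} (h : c.Holds ω) (s : T' ⟶ T) : c.Holds (s ≫ ω) := by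
  rw [Holds, h, comp_toUnit_assoc]

lemma represents_factors_of_isPullback {U X : E} {m : U ⟶ X} {χ : X ⟶ c.Ω}
    (h : IsPullback (toUnit U) m c.truth χ) :
    c.Represents χ (fun _ t => ∃ l, l ≫ m = t) := by
  refine fun T t => ⟨fun ht => ⟨h.lift _ t ht.symm, h.lift_snd _ _ _⟩, ?_⟩
  rintro ⟨l, rfl⟩
  rw [assoc, ← h.w]
  exact Holds.precomp rfl l

lemma Represents.isPullback {U X : E} {m : U ⟶ X} [Mono m] {χ : X ⟶ c.Ω}
    (h : c.Represents χ (fun _ t => ∃ l, l ≫ m = t)) :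
    IsPullback (toUnit U) m c.truth χ where
  w := ((h m).2 ⟨𝟙 U, id_comp m⟩).symm
  isLimit' := by
    have lifts (s : PullbackCone c.truth χ) : ∃ l, l ≫ m = s.snd :=
      (h s.snd).1 (s.condition.symm.trans (by rw [toUnit_unique s.fst (toUnit s.pt)]))
    choose l hl using lifts
    exact ⟨PullbackCone.IsLimit.mk _ l (fun _ => toUnit_unique _ _) hl
      fun s k _ hk => (cancel_mono m).1 (hk.trans (hl s).symm)⟩

lemma isRepresentable_factors {U X : E} (m : U ⟶ X) [Mono m] :
    c.IsRepresentable (X := X) (fun _ t => ∃ l, l ≫ m = t) :=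
  let ⟨χ, hχ, _⟩ := c.classifies m inferInstance
  ⟨χ, represents_factors_of_isPullback hχ⟩

lemma IsRepresentable.congr {X : E} {P Q : Presieve X} (h : c.IsRepresentable P)
    (hPQ : ∀ ⦃T : E⦄ (t : T ⟶ X), P t ↔ Q t) : c.IsRepresentable Q :=
  let ⟨χ, hχ⟩ := h
  ⟨χ, fun _ t => (hχ t).trans (hPQ t)⟩

lemma IsRepresentable.precomp {X Y : E} {P : Presieve X} (h : c.IsRepresentable P) (f : Y ⟶ X) :
    c.IsRepresentable (X := Y) (fun _ t => P (t ≫ f)) :=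
  let ⟨χ, hχ⟩ := h
  ⟨f ≫ χ, fun _ t => by rw [← assoc, hχ]⟩

lemma isRepresentable_holds {X : E} (χ : X ⟶ c.Ω) :
    c.IsRepresentable (X := X) (fun _ t => c.Holds (t ≫ χ)) :=
  ⟨χ, fun _ _ => Iff.rfl⟩

variable (c) in
/-- The equality predicate of `A`, classifying the diagonal. -/
noncomputable def eqPred (A : E) : A ⊗ A ⟶ c.Ω :=
  (isRepresentable_factors (lift (𝟙 A) (𝟙 A))).choose

lemma holds_eqPred_iff {A T : E} (a b : T ⟶ A) : c.Holds (lift a b ≫ c.eqPred A) ↔ a = b := by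
  refine ((isRepresentable_factors (lift (𝟙 A) (𝟙 A))).choose_spec (lift a b)).trans ?_
  simp only [comp_lift, comp_id, CartesianMonoidalCategory.hom_ext_iff, lift_fst, lift_snd,
    exists_eq_left]

variable [HasFiniteLimits E]

variable (c) in
/-- The subobject on which the formula `χ` holds. -/
noncomputable def extent {X : E} (χ : X ⟶ c.Ω) : E :=
  pullback c.truth χ

variable (c) in
/-- The inclusion of the subobject on which the formula `χ` holds. -/
noncomputable def incl {X : E} (χ : X ⟶ c.Ω) : c.extent χ ⟶ X :=
  pullback.snd c.truth χ

lemma isPullback_incl {X : E} (χ : X ⟶ c.Ω) :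
    IsPullback (toUnit (c.extent χ)) (c.incl χ) c.truth χ := by
  rw [toUnit_unique (toUnit (c.extent χ)) (pullback.fst c.truth χ)]
  exact IsPullback.of_hasPullback c.truth χ

instance {X : E} (χ : X ⟶ c.Ω) : Mono (c.incl χ) :=
  have : Mono c.truth := ⟨fun _ _ _ => toUnit_unique _ _⟩
  inferInstanceAs (Mono (pullback.snd c.truth χ))

lemma represents_factors_incl {X : E} (χ : X ⟶ c.Ω) :
    c.Represents χ (fun _ t => ∃ l, l ≫ c.incl χ = t) :=
  represents_factors_of_isPullback (isPullback_incl χ)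

lemma holds_incl_comp {X : E} (χ : X ⟶ c.Ω) : c.Holds (c.incl χ ≫ χ) :=
  (represents_factors_incl χ _).2 ⟨𝟙 _, id_comp _⟩

lemma Represents.unique {X : E} {P : Presieve X} {χ χ' : X ⟶ c.Ω}
    (h : c.Represents χ P) (h' : c.Represents χ' P) : χ = χ' := by
  refine (c.classifies (c.incl χ) inferInstance).unique (isPullback_incl χ)
    (Represents.isPullback fun T t => ?_)
  rw [h', ← h, represents_factors_incl χ]

lemma hom_ext {X : E} {χ χ' : X ⟶ c.Ω}
    (h : ∀ ⦃T : E⦄ (t : T ⟶ X), c.Holds (t ≫ χ) ↔ c.Holds (t ≫ χ')) : χ = χ' :=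
  Represents.unique (P := fun _ t => c.Holds (t ≫ χ')) h fun _ _ => Iff.rfl

lemma isRepresentable_eq {X Y : E} (f g : X ⟶ Y) :
    c.IsRepresentable (X := X) (fun _ t => t ≫ f = t ≫ g) :=
  (isRepresentable_factors (equalizer.ι f g)).congr fun _ t =>
    ⟨by rintro ⟨l, rfl⟩; rw [assoc, assoc, equalizer.condition],
      fun h => ⟨equalizer.lift t h, equalizer.lift_ι t h⟩⟩

lemma IsRepresentable.and {X : E} {P Q : Presieve X}
    (hP : c.IsRepresentable P) (hQ : c.IsRepresentable Q) :
    c.IsRepresentable (X := X) (fun _ t => P t ∧ Q t) := by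
  obtain ⟨φ, hφ⟩ := hP
  obtain ⟨ψ, hψ⟩ := hQ
  refine (isRepresentable_eq (lift φ ψ) (toUnit X ≫ lift c.truth c.truth)).congr fun T t => ?_
  rw [← hφ, ← hψ, comp_lift, comp_toUnit_assoc, comp_lift]
  exact ⟨fun h => ⟨by simpa only [lift_fst] using! congrArg (· ≫ fst _ _) h,
    by simpa only [lift_snd] using! congrArg (· ≫ snd _ _) h⟩, fun h => by rw [h.1, h.2]⟩

-- `P` implies `Q` exactly when `P` and `P ∧ Q` have the same truth value.
lemma IsRepresentable.imp {X : E} {P Q : Presieve X}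
    (hP : c.IsRepresentable P) (hQ : c.IsRepresentable Q) :
    c.IsRepresentable (X := X) (fun T t => ∀ ⦃T' : E⦄ (s : T' ⟶ T), P (s ≫ t) → Q (s ≫ t)) := by
  obtain ⟨φ, hφ⟩ := hP
  obtain ⟨χ, hχ⟩ := IsRepresentable.and ⟨φ, hφ⟩ hQ
  refine (isRepresentable_eq φ χ).congr fun T t => ⟨fun h T' s hs => ?_, fun h => ?_⟩
  · rw [← hφ, assoc, h, ← assoc, hχ] at hs
    exact hs.2
  · refine hom_ext fun T' s => ?_
    rw [← assoc, ← assoc, hφ, hχ]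
    exact ⟨fun hs => ⟨hs, h s hs⟩, And.left⟩

lemma exists_extension {V T : E} (m : V ⟶ T) [Mono m] (φ : V ⟶ c.Ω) :
    ∃ ψ : T ⟶ c.Ω, m ≫ ψ = φ := by
  obtain ⟨ψ, hψ⟩ := isRepresentable_factors (c := c) (c.incl φ ≫ m)
  refine ⟨ψ, hom_ext fun T' t => ?_⟩
  rw [← assoc, hψ, represents_factors_incl φ]
  simp only [← assoc, cancel_mono]

end Forcing

section HigherOrder

variable {E : Type u} [Category.{v} E] [CartesianMonoidalCategory E] [HasFiniteLimits E]
  [MonoidalClosed E] {c : _root_.Classifier E}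

lemma IsRepresentable.forall {C B : E} {P : Presieve (C ⊗ B)} (h : c.IsRepresentable P) :
    c.IsRepresentable (X := B)
      (fun T b => ∀ ⦃T' : E⦄ (s : T' ⟶ T) (x : T' ⟶ C), P (lift x (s ≫ b))) := by
  obtain ⟨φ, hφ⟩ := h
  refine (isRepresentable_eq (curry φ) (curry (toUnit _ ≫ c.truth))).congr fun T b => ?_
  rw [← curry_natural_left, ← curry_natural_left, curry_injective.eq_iff, comp_toUnit_assoc]
  refine ⟨fun hb T' s x => ?_, fun hb => ?_⟩
  · rw [← lift_whiskerLeft, ← hφ, assoc]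
    exact Holds.precomp hb _
  · have h := hb (snd C T) (fst C T)
    rwa [← lift_whiskerLeft, lift_fst_snd, id_comp, ← hφ] at h

lemma IsRepresentable.forall_imp {C B : E} {P Q : Presieve (C ⊗ B)}
    (hP : c.IsRepresentable P) (hQ : c.IsRepresentable Q) :
    c.IsRepresentable (X := B) (fun T b => ∀ ⦃T' : E⦄ (s : T' ⟶ T) (x : T' ⟶ C),
      P (lift x (s ≫ b)) → Q (lift x (s ≫ b))) := by
  refine (hP.imp hQ).forall.congr fun T b =>
    ⟨fun h T' s x => by simpa using h s x (𝟙 T'), fun h T' s x T'' r => ?_⟩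
  simpa only [comp_lift, assoc] using h (r ≫ s) (r ≫ x)

variable (c) in
/-- The singleton map `a ↦ {a}` from `A` to its power object. -/
noncomputable def sing (A : E) : A ⟶ (ihom A).obj c.Ω :=
  curry (c.eqPred A)

lemma comp_sing_eq_comp_curry_iff {A B T : E} (x : T ⟶ A) (b : T ⟶ B) (φ : A ⊗ B ⟶ c.Ω) :
    x ≫ c.sing A = b ≫ curry φ ↔
      ∀ ⦃T' : E⦄ (s : T' ⟶ T) (y : T' ⟶ A), c.Holds (lift y (s ≫ b) ≫ φ) ↔ y = s ≫ x := by
  have pointwise {T' : E} (s : T' ⟶ T) (y : T' ⟶ A) {C : E} (z : T ⟶ C) (ψ : A ⊗ C ⟶ c.Ω) :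
      lift y s ≫ A ◁ z ≫ ψ = lift y (s ≫ z) ≫ ψ := by
    rw [← assoc, lift_whiskerLeft]
  rw [sing, ← curry_natural_left, ← curry_natural_left, curry_injective.eq_iff]
  refine ⟨fun h T' s y => ?_, fun h => hom_ext fun T' t => ?_⟩
  · rw [← pointwise, ← h, pointwise, holds_eqPred_iff]
  · obtain ⟨y, s, rfl⟩ : ∃ y s, t = lift y s := ⟨_, _, (lift_comp_fst_snd t).symm⟩
    rw [pointwise, pointwise, holds_eqPred_iff, h]

instance mono_sing (A : E) : Mono (c.sing A) where
  right_cancellation x y h := by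
    have h := (comp_sing_eq_comp_curry_iff x y (c.eqPred A)).1 h (𝟙 _) x
    simpa only [id_comp, holds_eqPred_iff, iff_true] using h

-- The unique existence of `x` says that the classified subset is a singleton.
lemma IsRepresentable.existsUnique {C B : E} {P : Presieve (C ⊗ B)} (h : c.IsRepresentable P) :
    c.IsRepresentable (X := B) (fun T b => ∃ x : T ⟶ C,
      ∀ ⦃T' : E⦄ (s : T' ⟶ T) (y : T' ⟶ C), P (lift y (s ≫ b)) ↔ y = s ≫ x) := by
  obtain ⟨φ, hφ⟩ := h
  refine ((isRepresentable_factors (c.sing C)).precomp (curry φ)).congr fun T b => ?_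
  simp only [comp_sing_eq_comp_curry_iff, hφ _]

lemma exists_extension_power {A V T : E} (m : V ⟶ T) [Mono m] (φ : V ⟶ (ihom A).obj c.Ω) :
    ∃ ψ : T ⟶ (ihom A).obj c.Ω, m ≫ ψ = φ := by
  have : Mono (A ◁ m) :=
    MorphismProperty.of_isPullback (P := .monomorphisms E) (isPullback_whiskerLeft A m) ‹_›
  obtain ⟨ψ, hψ⟩ := exists_extension (A ◁ m) (uncurry φ)
  exact ⟨curry ψ, by rw [← curry_natural_left, hψ, curry_uncurry]⟩

end HigherOrder

end Classifier

/-- A Lawvere–Tierney topology, as the modality `j` ("it is locally the case that"). The usual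
equations are replaced by the equivalent forcing clauses: truth is local, and what holds locally
wherever a local truth holds is itself a local truth. -/
structure LawvereTierneyTopology {E : Type u} [Category.{v} E] [CartesianMonoidalCategory E]
    (c : _root_.Classifier E) where
  j : c.Ω ⟶ c.Ω
  holds_comp_j {T : E} {ω : T ⟶ c.Ω} : c.Holds ω → c.Holds (ω ≫ j)
  trans {T : E} {ω ω' : T ⟶ c.Ω} : c.Holds (ω ≫ j) →
    (∀ ⦃T' : E⦄ (t : T' ⟶ T), c.Holds (t ≫ ω) → c.Holds (t ≫ ω' ≫ j)) → c.Holds (ω' ≫ j)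

namespace LawvereTierneyTopology

open Classifier

section Covers

variable {E : Type u} [Category.{v} E] [CartesianMonoidalCategory E] {c : _root_.Classifier E}
  (J : LawvereTierneyTopology c)

/-- A family `R` of maps into `T` covers `T` if every formula on `T` that is true along `R` is
locally true. No subobject generated by `R` is needed, so `R` may be an external condition. -/
def Covers {T : E} (R : Presieve T) : Prop :=
  ∀ ω : T ⟶ c.Ω, (∀ ⦃T' : E⦄ (t : T' ⟶ T), R t → c.Holds (t ≫ ω)) → c.Holds (ω ≫ J.j)

/-- The elements of `B` that have, stably under restriction, preimages under `f` along a cover. -/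
def LocallyFactors {A B : E} (f : A ⟶ B) : Presieve B := fun T b =>
  ∀ ⦃T' : E⦄ (s : T' ⟶ T), J.Covers (T := T') fun _ t => ∃ a, a ≫ f = t ≫ s ≫ b

/-- `f` is locally surjective: every element of `B` has preimages under `f` along a cover. -/
def locallySurjective : MorphismProperty E := fun _ B f =>
  ∀ ⦃T : E⦄ (b : T ⟶ B), J.Covers (T := T) fun _ t => ∃ a, a ≫ f = t ≫ b

/-- `f` is locally injective: elements of `A` identified by `f` agree along a cover. -/
def locallyInjective : MorphismProperty E := fun A _ f =>
  ∀ ⦃T : E⦄ (a₁ a₂ : T ⟶ A), a₁ ≫ f = a₂ ≫ f → J.Covers (T := T) fun _ t => t ≫ a₁ = t ≫ a₂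

/-- The maps that are locally surjective and locally injective; they turn out to be the maps
inverted by sheafification. -/
def locallyBijective : MorphismProperty E :=
  J.locallySurjective ⊓ J.locallyInjective

/-- A sheaf is an object orthogonal to all dense monomorphisms, the dense monomorphisms being the
locally surjective ones. -/
def IsSheaf : ObjectProperty E :=
  (MorphismProperty.monomorphisms E ⊓ J.locallySurjective).isLocal

variable {J}

lemma covers_of_id_mem {T : E} {R : Presieve T} (h : R (𝟙 T)) : J.Covers R := fun ω hω =>
  J.holds_comp_j (by simpa only [id_comp] using hω _ h)

lemma Covers.mono {T : E} {R R' : Presieve T} (hR : J.Covers R)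
    (h : ∀ ⦃T' : E⦄ (t : T' ⟶ T), R t → R' t) : J.Covers R' :=
  fun ω hω => hR ω fun _ t ht => hω t (h t ht)

lemma covers_of_represents {T : E} {R : Presieve T} {ω : T ⟶ c.Ω} (hR : c.Represents ω R)
    (hω : c.Holds (ω ≫ J.j)) : J.Covers R := fun ω' hω' =>
  J.trans hω fun _ t ht => by
    rw [← assoc]
    exact J.holds_comp_j (hω' t ((hR t).1 ht))

lemma Covers.holds_comp_j {T : E} {R : Presieve T} {ω : T ⟶ c.Ω} (h : J.Covers R)
    (hR : c.Represents ω R) : c.Holds (ω ≫ J.j) :=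
  h ω fun _ t => (hR t).2

lemma locallyInjective_of_postcomp {A B C : E} {f : A ⟶ B} {g : B ⟶ C}
    (h : J.locallyInjective (f ≫ g)) : J.locallyInjective f := fun _ a a' haa' =>
  h a a' (by rw [← assoc, haa', assoc])

lemma locallySurjective_iff_of_represents {U X : E} {m : U ⟶ X} {χ : X ⟶ c.Ω}
    (hχ : c.Represents χ fun _ t => ∃ l, l ≫ m = t) :
    J.locallySurjective m ↔ c.Holds (χ ≫ J.j) := by
  refine ⟨fun hm => (hm (𝟙 X)).holds_comp_j fun _ t => by simpa only [comp_id] using hχ t,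
    fun h T b => ?_⟩
  refine covers_of_represents (ω := b ≫ χ) (fun _ t => by rw [← assoc, hχ]) ?_
  rw [assoc]
  exact h.precomp b

instance : J.locallySurjective.IsStableUnderBaseChange where
  of_isPullback {_ _ _ _ g _ _ _} sq hf _ b := (hf (b ≫ g)).mono fun _ t ⟨a, ha⟩ =>
    ⟨sq.lift a (t ≫ b) (by rw [ha, assoc]), sq.lift_snd _ _ _⟩

instance : J.locallyInjective.IsStableUnderBaseChange where
  of_isPullback {_ _ _ _ _ _ g' _} sq hf _ a a' haa' :=
    (hf (a ≫ g') (a' ≫ g') (by simp only [assoc, sq.w, reassoc_of% haa'])).mono fun _ t ht =>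
      sq.hom_ext (by simpa only [assoc] using ht) (by simp only [assoc, haa'])

instance : J.locallyBijective.IsStableUnderBaseChange :=
  inferInstanceAs (J.locallySurjective ⊓ J.locallyInjective).IsStableUnderBaseChange

lemma IsSheaf.of_closed {M B : E} (m : M ⟶ B) [Mono m] (hB : J.IsSheaf B)
    (closed : ∀ ⦃T : E⦄ (b : T ⟶ B), J.LocallyFactors m b → ∃ l, l ≫ m = b) :
    J.IsSheaf M := fun V T d hd => by
  refine ⟨fun x y hxy => ?_, fun x => ?_⟩
  · exact (cancel_mono m).1 ((hB d hd).1 (by simpa only [assoc] using congrArg (· ≫ m) hxy))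
  · obtain ⟨b, hb : d ≫ b = x ≫ m⟩ := (hB d hd).2 (x ≫ m)
    obtain ⟨l, rfl⟩ := closed b fun _ s => (hd.2 s).mono fun _ t ⟨a, ha⟩ =>
      ⟨a ≫ x, by rw [assoc, ← hb, ← assoc, ha, assoc]⟩
    exact ⟨l, (cancel_mono m).1 (by simpa only [assoc] using hb)⟩

lemma IsSheaf.ihom [MonoidalClosed E] {C : E} (hC : J.IsSheaf C) (A : E) :
    J.IsSheaf ((ihom A).obj C) :=
  fun V T m hm => by
    have bij := hC (A ◁ m) (MorphismProperty.of_isPullback (isPullback_whiskerLeft A m) hm)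
    refine ⟨fun f g h => MonoidalClosed.uncurry_injective (bij.1 ?_), fun f => ?_⟩
    · simpa only [MonoidalClosed.uncurry_natural_left] using congrArg uncurry h
    · obtain ⟨g, hg⟩ := bij.2 (uncurry f)
      exact ⟨curry g, by simp only [← curry_natural_left, hg, curry_uncurry]⟩

variable [HasFiniteLimits E]

lemma j_comp_j : J.j ≫ J.j = J.j := by
  refine hom_ext fun T t => ⟨fun h => ?_, fun h => ?_⟩
  · rw [← assoc] at h
    exact J.trans h fun _ _ => id
  · rw [← assoc]
    exact J.holds_comp_j h

lemma Covers.trans {T : E} {R R' : Presieve T} (hR : J.Covers R)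
    (h : ∀ ⦃T' : E⦄ (t : T' ⟶ T), R t → J.Covers (T := T') fun _ s => R' (s ≫ t)) :
    J.Covers R' := fun ω hω => by
  rw [← j_comp_j, ← assoc]
  refine hR (ω ≫ J.j) fun _ t ht => ?_
  rw [← assoc]
  exact h t ht _ fun _ s hs => by simpa only [assoc] using hω _ hs

lemma locallyBijective_of_postcomp {A B C : E} {f : A ⟶ B} {g : B ⟶ C}
    (hfg : J.locallyBijective (f ≫ g)) (hg : J.locallyInjective g) : J.locallyBijective f := by
  refine ⟨fun T b => ?_, locallyInjective_of_postcomp hfg.2⟩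
  refine (hfg.1 (b ≫ g)).trans fun T' t ⟨a, ha⟩ => ?_
  refine (hg (a ≫ f) (t ≫ b) (by simpa only [assoc] using ha)).mono fun T'' s hs => ?_
  exact ⟨s ≫ a, by simpa only [assoc] using hs⟩

end Covers

section Sheaves

variable {E : Type u} [Category.{v} E] [CartesianMonoidalCategory E] [HasFiniteLimits E]
  {c : _root_.Classifier E} {J : LawvereTierneyTopology c}

lemma IsSheaf.hom_ext {C T : E} (hC : J.IsSheaf C) {f g : T ⟶ C} {R : Presieve T}
    (hR : J.Covers R) (h : ∀ ⦃T' : E⦄ (t : T' ⟶ T), R t → t ≫ f = t ≫ g) : f = g := by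
  obtain ⟨χ, hχ⟩ := isRepresentable_eq (c := c) f g
  have hχj : c.Holds (χ ≫ J.j) := (hR.mono h).holds_comp_j hχ
  have dense := (locallySurjective_iff_of_represents (represents_factors_incl χ)).2 hχj
  exact (hC (c.incl χ) ⟨inferInstanceAs (Mono _), dense⟩).1 ((hχ _).1 (holds_incl_comp χ))

lemma IsSheaf.comp_eq_comp_of_locallyInjective {A Y C T : E} (hC : J.IsSheaf C) {f : A ⟶ Y}
    (hf : J.locallyInjective f) (h : A ⟶ C) {a a' : T ⟶ A} (haa' : a ≫ f = a' ≫ f) :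
    a ≫ h = a' ≫ h :=
  hC.hom_ext (hf a a' haa') fun _ t ht => by rw [← assoc, ht, assoc]

variable (J) in
/-- The object of closed truth values, i.e. of those fixed by `j`. -/
noncomputable def closedΩ : E :=
  equalizer J.j (𝟙 c.Ω)

variable (J) in
/-- The inclusion of the closed truth values. -/
noncomputable def closedΩι : J.closedΩ ⟶ c.Ω :=
  equalizer.ι J.j (𝟙 c.Ω)

instance : Mono J.closedΩι :=
  inferInstanceAs (Mono (equalizer.ι J.j (𝟙 c.Ω)))

lemma closedΩι_comp_j : J.closedΩι ≫ J.j = J.closedΩι :=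
  (equalizer.condition J.j (𝟙 c.Ω)).trans (comp_id _)

variable (J) in
/-- The closure map from truth values to closed truth values. -/
noncomputable def closure : c.Ω ⟶ J.closedΩ :=
  equalizer.lift J.j (by rw [j_comp_j, comp_id])

lemma closure_comp_closedΩι : J.closure ≫ J.closedΩι = J.j :=
  equalizer.lift_ι _ _

lemma holds_comp_closedΩι_of_covers {T : E} {κ : T ⟶ J.closedΩ} {R : Presieve T}
    (hR : J.Covers R) (h : ∀ ⦃T' : E⦄ (t : T' ⟶ T), R t → c.Holds (t ≫ κ ≫ J.closedΩι)) :
    c.Holds (κ ≫ J.closedΩι) := by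
  rw [← closedΩι_comp_j, ← assoc]
  exact hR _ h

lemma isSheaf_closedΩ : J.IsSheaf J.closedΩ := fun V T m ⟨(_ : Mono m), hm⟩ => by
  refine ⟨fun κ κ' (h : m ≫ κ = m ≫ κ') => (cancel_mono J.closedΩι).1 ?_, fun κ => ?_⟩
  · have le {κ κ' : T ⟶ J.closedΩ} (h : m ≫ κ = m ≫ κ') ⦃T' : E⦄ (t : T' ⟶ T)
        (ht : c.Holds (t ≫ κ ≫ J.closedΩι)) : c.Holds (t ≫ κ' ≫ J.closedΩι) := by
      rw [← assoc]
      refine holds_comp_closedΩι_of_covers (hm t) fun _ s ⟨l, hl⟩ => ?_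
      rw [assoc, ← assoc, ← hl, assoc, ← reassoc_of% h, reassoc_of% hl]
      exact ht.precomp s
    exact Classifier.hom_ext fun _ t => ⟨le h t, le h.symm t⟩
  · obtain ⟨ω, hω⟩ := exists_extension m (κ ≫ J.closedΩι)
    refine ⟨ω ≫ J.closure, (cancel_mono J.closedΩι).1 ?_⟩
    simp only [assoc, closure_comp_closedΩι, reassoc_of% hω, closedΩι_comp_j]

end Sheaves

section Sheafification

variable {E : Type u} [Category.{v} E] [CartesianMonoidalCategory E] [HasFiniteLimits E]
  [MonoidalClosed E] {c : _root_.Classifier E} {J : LawvereTierneyTopology c}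

-- The internal formula `∃! z, ∀ a, f a = y → h a = z` on `Y`.
lemma isRepresentable_existsUnique_forall_fiber {A Y C : E} (f : A ⟶ Y) (h : A ⟶ C) :
    c.IsRepresentable (X := Y) (fun T y => ∃ x : T ⟶ C, ∀ ⦃T' : E⦄ (s : T' ⟶ T) (z : T' ⟶ C),
      (∀ ⦃T'' : E⦄ (r : T'' ⟶ T') (a : T'' ⟶ A), a ≫ f = r ≫ s ≫ y → a ≫ h = r ≫ z) ↔
        z = s ≫ x) := by
  have fiber := isRepresentable_eq (c := c) (fst A (C ⊗ Y) ≫ f) (snd A (C ⊗ Y) ≫ snd C Y)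
  have value := isRepresentable_eq (c := c) (fst A (C ⊗ Y) ≫ h) (snd A (C ⊗ Y) ≫ fst C Y)
  refine (fiber.forall_imp value).existsUnique.congr fun T y => ?_
  simp only [lift_fst_assoc, lift_snd_assoc, assoc, lift_fst, lift_snd]

lemma IsSheaf.surjective_precomp {A Y C : E} (hC : J.IsSheaf C) {f : A ⟶ Y}
    (hf : J.locallyBijective f) (h : A ⟶ C) : ∃ g : Y ⟶ C, f ≫ g = h := by
  obtain ⟨χ, hχ⟩ := isRepresentable_existsUnique_forall_fiber (c := c) f h
  have holds_on_image ⦃T : E⦄ (a : T ⟶ A) : c.Holds ((a ≫ f) ≫ χ) := by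
    refine (hχ _).2 ⟨a ≫ h, fun T' s z => ⟨fun hz => ?_, ?_⟩⟩
    · simpa only [id_comp, assoc] using (hz (𝟙 _) (s ≫ a) (by simp only [id_comp, assoc])).symm
    · rintro rfl T'' r a' ha'
      have haa' : a' ≫ f = (r ≫ s ≫ a) ≫ f := by simpa only [assoc] using ha'
      simpa only [assoc] using hC.comp_eq_comp_of_locallyInjective hf.2 h haa'
  have dense : J.locallySurjective (c.incl χ) := by
    refine (locallySurjective_iff_of_represents (represents_factors_incl χ)).2
      (hf.1 (𝟙 Y) χ fun T t ⟨a, ha⟩ => ?_)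
    rw [← comp_id t, ← ha]
    exact holds_on_image a
  obtain ⟨x, hx⟩ := (hχ _).1 (holds_incl_comp χ)
  obtain ⟨g, hg : c.incl χ ≫ g = x⟩ := (hC (c.incl χ) ⟨inferInstanceAs (Mono _), dense⟩).2 x
  obtain ⟨l, hl⟩ : ∃ l, l ≫ c.incl χ = f :=
    (represents_factors_incl χ f).1 (by simpa only [id_comp] using holds_on_image (𝟙 A))
  refine ⟨g, ?_⟩
  rw [← hl, assoc, hg]
  simpa only [id_comp] using
    ((hx l _).2 rfl (𝟙 A) (𝟙 A) (by simp only [id_comp, hl])).symm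

lemma locallyBijective_le_isLocal : J.locallyBijective ≤ J.IsSheaf.isLocal := fun _ Y _ hf _ hC =>
  ⟨fun g g' h => hC.hom_ext (hf.1 (𝟙 Y)) fun _ t ⟨a, ha⟩ => by
      rw [← comp_id t, ← ha, assoc, assoc]
      exact congrArg (a ≫ ·) h,
    hC.surjective_precomp hf⟩

lemma isRepresentable_locallyFactors {A B : E} (f : A ⟶ B) :
    c.IsRepresentable (J.LocallyFactors f) := by
  have fiber := isRepresentable_eq (c := c) (fst A (c.Ω ⊗ B) ≫ f) (snd A (c.Ω ⊗ B) ≫ snd c.Ω B)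
  have truth := isRepresentable_holds (snd A (c.Ω ⊗ B) ≫ fst c.Ω B)
  have localTruth := isRepresentable_holds (fst c.Ω B ≫ J.j)
  refine ((fiber.forall_imp truth).forall_imp localTruth).congr fun T b => ?_
  simp only [lift_fst_assoc, lift_snd_assoc, assoc, lift_fst, lift_snd, LocallyFactors, Covers,
    forall_exists_index]

lemma IsSheaf.exists_image {A B : E} (hB : J.IsSheaf B) (f : A ⟶ B) :
    ∃ (M : E) (e : A ⟶ M) (m : M ⟶ B), e ≫ m = f ∧ J.locallySurjective e ∧ J.IsSheaf M := by
  obtain ⟨χ, hχ⟩ := isRepresentable_locallyFactors (J := J) f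
  have factors_iff ⦃T : E⦄ (b : T ⟶ B) := (represents_factors_incl χ b).symm.trans (hχ b)
  have covers ⦃T : E⦄ (b : T ⟶ c.extent χ) :
      J.Covers (T := T) fun _ t => ∃ a, a ≫ f = t ≫ b ≫ c.incl χ := by
    simpa only [id_comp] using (factors_iff (b ≫ c.incl χ)).1 ⟨b, rfl⟩ (𝟙 T)
  obtain ⟨e, he⟩ := (factors_iff f).2 fun _ s => covers_of_id_mem ⟨s, by rw [id_comp]⟩
  refine ⟨_, e, c.incl χ, he, fun T b => (covers b).mono fun _ t ⟨a, ha⟩ => ⟨a, ?_⟩,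
    hB.of_closed (c.incl χ) fun T b hb => (factors_iff b).2 fun T' s =>
      (hb s).trans fun _ t ⟨l, hl⟩ => (covers l).mono fun _ r ⟨a, ha⟩ => ⟨a, ?_⟩⟩
  · rw [← cancel_mono (c.incl χ), assoc, he, ha, assoc]
  · rw [ha, hl, assoc]

-- The embedding sends `a` to its closed singleton `{x | j (x = a)}`.
lemma exists_locallyInjective_isSheaf (A : E) :
    ∃ (B : E) (f : A ⟶ B), J.locallyInjective f ∧ J.IsSheaf B := by
  refine ⟨_, curry (c.eqPred A ≫ J.closure), fun T a a' h => ?_, isSheaf_closedΩ.ihom A⟩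
  rw [← curry_natural_left, ← curry_natural_left, curry_injective.eq_iff] at h
  have same_closure : (lift a a ≫ c.eqPred A) ≫ J.j = (lift a a' ≫ c.eqPred A) ≫ J.j := by
    simpa only [assoc, closure_comp_closedΩι, lift_whiskerLeft_assoc, id_comp] using
      congrArg (fun φ => lift a (𝟙 T) ≫ φ ≫ J.closedΩι) h
  refine covers_of_represents (ω := lift a a' ≫ c.eqPred A) (fun _ t => ?_) ?_
  · rw [← assoc, comp_lift, holds_eqPred_iff]
  · rw [← same_closure]
    exact J.holds_comp_j ((holds_eqPred_iff a a).2 rfl)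

lemma exists_sheafification (A : E) :
    ∃ (M : E) (η : A ⟶ M), J.locallyBijective η ∧ J.IsSheaf M := by
  obtain ⟨B, f, hf, hB⟩ := exists_locallyInjective_isSheaf (J := J) A
  obtain ⟨M, e, m, rfl, he, hM⟩ := hB.exists_image f
  exact ⟨M, e, ⟨he, locallyInjective_of_postcomp hf⟩, hM⟩

variable {F : Type u₂} [Category.{v₂} F] {i : F ⥤ E} [i.Full] [i.Faithful]

lemma locallyBijective_unit_app (hi : i.essImage = J.IsSheaf) {L : E ⥤ F} (adj : L ⊣ i) (A : E) :
    J.locallyBijective (adj.unit.app A) := by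
  obtain ⟨M, η, hη, hM⟩ := exists_sheafification (J := J) A
  have : IsIso (adj.unit.app M) := adj.isIso_unit_app_iff_mem_essImage.2 (hi ▸ hM)
  have : IsIso (L.map η) := (isLocal_essImage_iff adj η).1 (hi ▸ locallyBijective_le_isLocal _ hη)
  have naturality : η ≫ adj.unit.app M = adj.unit.app A ≫ i.map (L.map η) :=
    (adj.unit_naturality η).symm
  rwa [← J.locallyBijective.cancel_right_of_respectsIso _ (adj.unit.app M), naturality,
    J.locallyBijective.cancel_right_of_respectsIso] at hη

lemma inverseImage_isomorphisms_eq_locallyBijective (hi : i.essImage = J.IsSheaf) {L : E ⥤ F}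
    (adj : L ⊣ i) : (MorphismProperty.isomorphisms F).inverseImage L = J.locallyBijective := by
  refine le_antisymm (fun A B f (_ : IsIso (L.map f)) => ?_) fun A B f hf => ?_
  · refine locallyBijective_of_postcomp (g := adj.unit.app B) ?_
      (locallyBijective_unit_app hi adj B).2
    rw [← adj.unit_naturality, J.locallyBijective.cancel_right_of_respectsIso]
    exact locallyBijective_unit_app hi adj A
  · exact (isLocal_essImage_iff adj f).1 (hi ▸ locallyBijective_le_isLocal _ hf)

lemma exists_lex_reflector (hi : i.essImage = J.IsSheaf) :
    ∃ L : E ⥤ F, Nonempty (L ⊣ i) ∧ PreservesFiniteLimits L := by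
  obtain ⟨L, ⟨adj⟩⟩ := exists_leftAdjoint i fun A => by
    obtain ⟨M, η, hη, hM⟩ := exists_sheafification (J := J) A
    obtain ⟨B, ⟨e⟩⟩ := hi ▸ hM
    refine ⟨B, η ≫ e.inv, hi ▸ locallyBijective_le_isLocal _ ?_⟩
    rwa [J.locallyBijective.cancel_right_of_respectsIso]
  have : ((MorphismProperty.isomorphisms F).inverseImage L).IsStableUnderBaseChange := by
    rw [inverseImage_isomorphisms_eq_locallyBijective hi adj]
    infer_instance
  exact ⟨L, ⟨adj⟩, preservesFiniteLimits_of_isStableUnderBaseChange adj⟩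

end Sheafification

end LawvereTierneyTopology

section UniversallyLocal

variable {E : Type u} [Category.{v} E]

/-- The maps all of whose pullbacks are orthogonal to `Z`. -/
abbrev universallyLocal (Z : E) : MorphismProperty E :=
  (ObjectProperty.singleton Z).isLocal.universally

lemma isLocal_singleton_iff {Z A B : E} {f : A ⟶ B} :
    (ObjectProperty.singleton Z).isLocal f ↔ Function.Bijective fun g : B ⟶ Z => f ≫ g := by
  simp only [ObjectProperty.isLocal, ObjectProperty.singleton_iff, forall_eq']

lemma bijective_precomp_of_universallyLocal {Z A B : E} {f : A ⟶ B} (hf : universallyLocal Z f) :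
    Function.Bijective fun g : B ⟶ Z => f ≫ g :=
  isLocal_singleton_iff.1 (MorphismProperty.universally_le _ _ hf)

end UniversallyLocal

section TopologyOf

open Classifier

variable {E : Type u} [Category.{v} E] [CartesianMonoidalCategory E] [HasFiniteLimits E]
  {c : _root_.Classifier E}

lemma forall_holds_imp_comp_eq_iff {T A : E} {ω : T ⟶ c.Ω} {f g : T ⟶ A} :
    (∀ ⦃T' : E⦄ (t : T' ⟶ T), c.Holds (t ≫ ω) → t ≫ f = t ≫ g) ↔
      c.incl ω ≫ f = c.incl ω ≫ g := by
  refine ⟨fun h => h _ (holds_incl_comp ω), fun h T' t ht => ?_⟩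
  obtain ⟨l, rfl⟩ := (represents_factors_incl ω t).1 ht
  rw [assoc, h, assoc]

lemma exists_isPullback_incl {T T' : E} (t : T' ⟶ T) (ω : T ⟶ c.Ω) :
    ∃ k, IsPullback k (c.incl (t ≫ ω)) (c.incl ω) t := by
  have sq := isPullback_incl (t ≫ ω)
  refine ⟨(isPullback_incl ω).lift _ _ (sq.w.trans (assoc _ _ _).symm), ?_⟩
  refine .of_right ?_ ((isPullback_incl ω).lift_snd _ _ _) (isPullback_incl ω)
  simpa only [comp_toUnit] using sq

variable (c) in
/-- A truth value `ω` at stage `T` is dense for `Z` if every partial map to `Z` defined on the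
extent of `ω` extends uniquely to `T`, stably under change of stage. -/
def DenseFor (Z : E) : Presieve c.Ω := fun _ ω =>
  universallyLocal Z (c.incl ω)

lemma DenseFor.precomp {Z T T' : E} {ω : T ⟶ c.Ω} (h : DenseFor c Z ω) (t : T' ⟶ T) :
    DenseFor c Z (t ≫ ω) :=
  let ⟨_, sq⟩ := exists_isPullback_incl t ω
  MorphismProperty.of_isPullback sq h

lemma denseFor_iff_universallyLocal {Z U X : E} {m : U ⟶ X} {χ : X ⟶ c.Ω}
    (hχ : IsPullback (toUnit U) m c.truth χ) :
    DenseFor c Z χ ↔ universallyLocal Z m := by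
  rw [DenseFor, ← hχ.isoIsPullback_hom_snd _ _ (isPullback_incl χ),
    (universallyLocal Z).cancel_left_of_respectsIso]

lemma denseFor_of_holds {Z T : E} {ω : T ⟶ c.Ω} (h : c.Holds ω) : DenseFor c Z ω := by
  obtain ⟨l, hl⟩ := (represents_factors_incl ω (𝟙 T)).1 (by rwa [id_comp])
  have : IsSplitEpi (c.incl ω) := ⟨⟨l, hl⟩⟩
  have : IsIso (c.incl ω) := isIso_of_mono_of_isSplitEpi _
  intro _ _ _ _ f' sq
  have : IsIso f' := MorphismProperty.of_isPullback (P := .isomorphisms E) sq.flip ‹_›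
  exact ObjectProperty.isLocal_of_isIso _ f'

lemma DenseFor.trans {Z T : E} {ω ω' : T ⟶ c.Ω} (h : DenseFor c Z ω)
    (h' : DenseFor c Z (c.incl ω ≫ ω')) : DenseFor c Z ω' := by
  obtain ⟨k, sq⟩ := exists_isPullback_incl (c.incl ω) ω'
  refine universally_of_precomp (f := k) (MorphismProperty.of_isPullback sq.flip h) ?_
  rw [sq.w]
  exact MorphismProperty.comp_mem _ _ _ h' h

variable [MonoidalClosed E]

-- A partial map to `Z` defined on the extent of `ω` is encoded as a total map `S` to the power
-- object of `Z` whose values on that extent are singletons.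
lemma denseFor_iff_forall_partial_map {Z T : E} (ω : T ⟶ c.Ω) :
    DenseFor c Z ω ↔ ∀ ⦃T' : E⦄ (t : T' ⟶ T) (S : T' ⟶ (ihom Z).obj c.Ω),
      (∀ ⦃Q : E⦄ (q : Q ⟶ T'), c.Holds (q ≫ t ≫ ω) → ∃ z, z ≫ c.sing Z = q ≫ S) →
        ∃ z : T' ⟶ Z, ∀ ⦃Q : E⦄ (q : Q ⟶ T') (z' : Q ⟶ Z),
          (∀ ⦃R : E⦄ (r : R ⟶ Q), c.Holds (r ≫ q ≫ t ≫ ω) → r ≫ z' ≫ c.sing Z = r ≫ q ≫ S) ↔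
            z' = q ≫ z := by
  constructor
  · intro h T' t S hS
    obtain ⟨x, hx⟩ := hS _ (holds_incl_comp (t ≫ ω))
    obtain ⟨z, hz : c.incl (t ≫ ω) ≫ z = x⟩ :=
      (bijective_precomp_of_universallyLocal (h.precomp t)).2 x
    refine ⟨z, fun Q q z' => ?_⟩
    obtain ⟨k, sq⟩ := exists_isPullback_incl q (t ≫ ω)
    have hS' : c.incl (q ≫ t ≫ ω) ≫ q ≫ S = (c.incl (q ≫ t ≫ ω) ≫ q ≫ z) ≫ c.sing Z := by
      rw [← reassoc_of% sq.w, ← hx, ← hz, assoc, ← reassoc_of% sq.w, assoc, assoc]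
    have inj := (bijective_precomp_of_universallyLocal ((h.precomp t).precomp q)).1
    rw [forall_holds_imp_comp_eq_iff, hS', ← assoc (c.incl _) z', cancel_mono]
    exact inj.eq_iff
  · intro h V T' k t v sq
    have holds_iff ⦃Q : E⦄ (q : Q ⟶ T') : c.Holds (q ≫ t ≫ ω) ↔ ∃ l, l ≫ v = q :=
      represents_factors_of_isPullback
        (by simpa only [comp_toUnit] using sq.flip.paste_horiz (isPullback_incl ω)) q
    have : Mono v := MorphismProperty.of_isPullback (P := .monomorphisms E) sq.flip
      (inferInstanceAs (Mono (c.incl ω)))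
    refine isLocal_singleton_iff.2 ⟨fun z₁ z₂ hz => ?_, fun x => ?_⟩
    · obtain ⟨z, unique⟩ := h t (z₁ ≫ c.sing Z) fun Q q _ => ⟨q ≫ z₁, assoc _ _ _⟩
      have eq_z (z' : T' ⟶ Z) (hz' : v ≫ z' = v ≫ z₁) : z' = 𝟙 T' ≫ z := by
        refine (unique (𝟙 T') z').1 fun R r hr => ?_
        obtain ⟨l, rfl⟩ := (holds_iff r).1 (by simpa only [id_comp] using hr)
        rw [id_comp, assoc, assoc, reassoc_of% hz']
      rw [eq_z z₁ rfl, eq_z z₂ hz.symm]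
    · obtain ⟨S, hS⟩ := exists_extension_power v (x ≫ c.sing Z)
      obtain ⟨z, unique⟩ := h t S fun Q q hq => by
        obtain ⟨l, rfl⟩ := (holds_iff q).1 hq
        exact ⟨l ≫ x, by rw [assoc, assoc, hS]⟩
      exact ⟨z, ((unique v x).1 fun R r _ => by rw [hS]).symm⟩

lemma isRepresentable_denseFor (Z : E) : c.IsRepresentable (DenseFor c Z) := by
  have holds := isRepresentable_holds (snd ((ihom Z).obj c.Ω) c.Ω)
  have isSing := (isRepresentable_factors (c := c) (c.sing Z)).precomp (fst _ c.Ω)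
  have isSing_fst := isRepresentable_eq (c := c) (fst Z _ ≫ c.sing Z) (snd _ _ ≫ fst _ c.Ω)
  refine ((holds.imp isSing).forall_imp
    ((holds.precomp (snd Z _)).imp isSing_fst).existsUnique).congr fun T ω => ?_
  simp only [lift_fst_assoc, lift_snd_assoc, assoc, lift_fst, lift_snd,
    denseFor_iff_forall_partial_map]

/-- The largest topology for which `Z` is a sheaf: its modality is "is dense for `Z`". -/
noncomputable def topologyOf (c : _root_.Classifier E) (Z : E) : LawvereTierneyTopology c where
  j := (isRepresentable_denseFor Z).choose
  holds_comp_j h := ((isRepresentable_denseFor Z).choose_spec _).2 (denseFor_of_holds h)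
  trans {T ω ω'} h h' := by
    have represents := (isRepresentable_denseFor (c := c) Z).choose_spec
    refine (represents ω').2 (((represents ω).1 h).trans ((represents _).1 ?_))
    rw [assoc]
    exact h' _ (holds_incl_comp ω)

lemma locallySurjective_topologyOf_iff {Z U X : E} (m : U ⟶ X) [Mono m] :
    (topologyOf c Z).locallySurjective m ↔ universallyLocal Z m := by
  obtain ⟨χ, hχ, _⟩ := c.classifies m inferInstance
  rw [LawvereTierneyTopology.locallySurjective_iff_of_represents
    (represents_factors_of_isPullback hχ), ← denseFor_iff_universallyLocal hχ]
  exact (isRepresentable_denseFor Z).choose_spec χ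

lemma isSheaf_topologyOf_self (Z : E) : (topologyOf c Z).IsSheaf Z :=
  fun _ _ m ⟨(_ : Mono m), hm⟩ =>
    bijective_precomp_of_universallyLocal ((locallySurjective_topologyOf_iff m).1 hm)

end TopologyOf

section LeastSubtopos

variable {E : Type u} [Category.{v} E] {F : Type u₂} [Category.{v₂} F] {iF : F ⥤ E} {LF : E ⥤ F}

/-- The reflective subcategory `F` contains `Z` and is contained in every subtopos of `E` that
contains `Z`. A subtopos is given by a fully faithful functor with a left exact left adjoint, and
the competing ones live in the same universes as `F`. -/
structure IsLeastSubtoposContaining (adjF : LF ⊣ iF) (Z : E) : Prop where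
  mem : IsIso (adjF.unit.app Z)
  le : ∀ {F' : Type u₂} [Category.{v₂} F'] (i' : F' ⥤ E), i'.Full → i'.Faithful →
    ∀ (L' : E ⥤ F') (adj' : L' ⊣ i'), PreservesFiniteLimits L' → IsIso (adj'.unit.app Z) →
      ∀ X : E, IsIso (adjF.unit.app X) → IsIso (adj'.unit.app X)

variable [iF.Full] [iF.Faithful]

lemma universallyLocal_of_isIso_map [PreservesLimitsOfShape WalkingCospan LF] (adjF : LF ⊣ iF)
    {Z : E} (hZ : IsIso (adjF.unit.app Z)) {A B : E} {f : A ⟶ B} (hf : IsIso (LF.map f)) :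
    universallyLocal Z f := by
  have : ((MorphismProperty.isomorphisms F).inverseImage LF).IsStableUnderBaseChange :=
    isStableUnderBaseChange_inverseImage_isomorphisms LF
  intro _ _ _ _ g sq
  have hg : IsIso (LF.map g) := MorphismProperty.of_isPullback
    (P := (MorphismProperty.isomorphisms F).inverseImage LF) sq.flip hf
  exact isLocal_singleton_iff.2 ((isLocal_essImage_iff adjF g).2 hg Z
    (adjF.isIso_unit_app_iff_mem_essImage.1 hZ))

variable [CartesianMonoidalCategory E] [HasFiniteLimits E] [MonoidalClosed E]
  [PreservesFiniteLimits LF]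

lemma mem_essImage_of_isSheaf_topologyOf (c : _root_.Classifier E) (adjF : LF ⊣ iF) {Z : E}
    (hZ : IsIso (adjF.unit.app Z)) {A : E} (hA : (topologyOf c Z).IsSheaf A) :
    iF.essImage A := by
  refine adjF.isIso_unit_app_iff_mem_essImage.1 (isIso_unit_app_of_isLocal adjF ?_)
  intro _ _ m ⟨(_ : Mono m), hm⟩
  have dense : (topologyOf c Z).locallySurjective m :=
    (locallySurjective_topologyOf_iff m).2 (universallyLocal_of_isIso_map adjF hZ hm)
  exact hA m ⟨‹_›, dense⟩

-- The sheaves for `topologyOf c Z` form a subtopos of `F` containing `Z`, hence all of `F`.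
lemma IsLeastSubtoposContaining.isSheaf_obj (c : _root_.Classifier E) {adjF : LF ⊣ iF} {Z : E}
    (hF : IsLeastSubtoposContaining adjF Z) (B : F) : (topologyOf c Z).IsSheaf (iF.obj B) := by
  let P : ObjectProperty F := (topologyOf c Z).IsSheaf.inverseImage iF
  have : (topologyOf c Z).IsSheaf.IsClosedUnderIsomorphisms :=
    inferInstanceAs (MorphismProperty.isLocal _).IsClosedUnderIsomorphisms
  have essImage_eq : (P.ι ⋙ iF).essImage = (topologyOf c Z).IsSheaf := by
    ext A
    refine ⟨fun ⟨B', ⟨e⟩⟩ => ObjectProperty.prop_of_iso _ e B'.property, fun hA => ?_⟩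
    obtain ⟨B', ⟨e⟩⟩ := mem_essImage_of_isSheaf_topologyOf c adjF hF.mem hA
    exact ⟨⟨B', (topologyOf c Z).IsSheaf.prop_of_iso e.symm hA⟩, ⟨e⟩⟩
  obtain ⟨L', ⟨adj'⟩, lex⟩ := LawvereTierneyTopology.exists_lex_reflector essImage_eq
  have isIso_unit_iff (A : E) : IsIso (adj'.unit.app A) ↔ (topologyOf c Z).IsSheaf A := by
    rw [adj'.isIso_unit_app_iff_mem_essImage, essImage_eq]
  exact (isIso_unit_iff _).1 <| hF.le _ inferInstance inferInstance L' adj' lex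
    ((isIso_unit_iff Z).2 (isSheaf_topologyOf_self Z)) _
    (adjF.isIso_unit_app_iff_mem_essImage.2 (iF.obj_mem_essImage B))

lemma IsLeastSubtoposContaining.isIso_map_iff_universallyLocal (c : _root_.Classifier E)
    {adjF : LF ⊣ iF} {Z : E} (hF : IsLeastSubtoposContaining adjF Z) {U X : E} (u : U ⟶ X)
    [Mono u] : IsIso (LF.map u) ↔ universallyLocal Z u := by
  refine ⟨universallyLocal_of_isIso_map adjF hF.mem, fun hu => ?_⟩
  have dense : (topologyOf c Z).locallySurjective u := (locallySurjective_topologyOf_iff u).2 hu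
  refine (ObjectProperty.isLocal_iff_isIso_map adjF u).1 ?_
  rintro _ ⟨B, rfl⟩
  exact hF.isSheaf_obj c B u ⟨‹_›, dense⟩

end LeastSubtopos

section FiniteProducts

lemma isLocal_singleton_obj_iff {E : Type u} [Category.{v} E] {S : Type u'} [Category.{v'} S]
    {L : E ⥤ S} {R : S ⥤ E} (adj : L ⊣ R) {C : S} {A B : E} {f : A ⟶ B} :
    (ObjectProperty.singleton (R.obj C)).isLocal f ↔
      (ObjectProperty.singleton C).isLocal (L.map f) := by
  rw [isLocal_singleton_iff, isLocal_singleton_iff,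
    ← (adj.homEquiv A C).symm.bijective.of_comp_iff',
    ← Function.Bijective.of_comp_iff _ (adj.homEquiv B C).bijective]
  simp only [Function.comp_def, adj.homEquiv_naturality_left_symm, Equiv.symm_apply_apply]

variable {S : Type u'} [Category.{v'} S] [CartesianMonoidalCategory S]

-- The equality predicate of `A` extends along `A ◁ f`, so `f` reflects equality of elements.
lemma mono_of_surjective_precomp_whiskerLeft (c : _root_.Classifier S) {A B : S} (f : A ⟶ B)
    (hf : Function.Surjective fun χ : A ⊗ B ⟶ c.Ω => A ◁ f ≫ χ) : Mono f where
  right_cancellation a a' haa' := by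
    obtain ⟨χ, hχ : A ◁ f ≫ χ = c.eqPred A⟩ := hf (c.eqPred A)
    have eqPred_eq : lift a a' ≫ c.eqPred A = lift a a ≫ c.eqPred A := by
      rw [← hχ, lift_whiskerLeft_assoc, lift_whiskerLeft_assoc, haa']
    rw [← Classifier.holds_eqPred_iff (c := c), eqPred_eq, Classifier.holds_eqPred_iff]

lemma isIso_of_mono_of_injective_precomp (c : _root_.Classifier S) {A B : S} (f : A ⟶ B) [Mono f]
    (hf : Function.Injective fun χ : B ⟶ c.Ω => f ≫ χ) : IsIso f := by
  obtain ⟨χ, hχ, _⟩ := c.classifies f inferInstance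
  have χ_holds : χ = toUnit B ≫ c.truth := hf (by simp only [← hχ.w, comp_toUnit_assoc])
  have : IsSplitEpi f :=
    ⟨⟨hχ.lift (toUnit B) (𝟙 B) (by rw [χ_holds, id_comp]), hχ.lift_snd _ _ _⟩⟩
  exact isIso_of_mono_of_isSplitEpi f

variable {E : Type u} [Category.{v} E] [CartesianMonoidalCategory E] {L : E ⥤ S} {R : S ⥤ E}

-- Pulling `f` back along the projection `A ⊗ B ⟶ B` is what makes `L.map f` a monomorphism.
lemma isIso_map_of_universallyLocal [PreservesFiniteProducts L] (c : _root_.Classifier S)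
    (adj : L ⊣ R) {A B : E} {f : A ⟶ B} (hf : universallyLocal (R.obj c.Ω) f) :
    IsIso (L.map f) := by
  have isLocal_map {A B : E} {f : A ⟶ B} (hf : universallyLocal (R.obj c.Ω) f) :
      (ObjectProperty.singleton c.Ω).isLocal (L.map f) :=
    (isLocal_singleton_obj_iff adj).1 (MorphismProperty.universally_le _ _ hf)
  have isLocal_whiskerLeft : (ObjectProperty.singleton c.Ω).isLocal (L.obj A ◁ L.map f) := by
    rw [← (ObjectProperty.singleton c.Ω).isLocal.cancel_left_of_respectsIso
      (CartesianMonoidalCategory.prodComparison L A A),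
      ← prodComparison_natural_whiskerLeft,
      (ObjectProperty.singleton c.Ω).isLocal.cancel_right_of_respectsIso]
    exact isLocal_map (MorphismProperty.of_isPullback (isPullback_whiskerLeft A f) hf)
  have := mono_of_surjective_precomp_whiskerLeft c (L.map f)
    (isLocal_singleton_iff.1 isLocal_whiskerLeft).2
  exact isIso_of_mono_of_injective_precomp c _ (isLocal_singleton_iff.1 (isLocal_map hf)).1

lemma universallyLocal_obj_Ω_eq [PreservesFiniteProducts L] (c : _root_.Classifier S)
    (adj : L ⊣ R) : universallyLocal (R.obj c.Ω) =
      ((MorphismProperty.isomorphisms S).inverseImage L).universally := by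
  refine le_antisymm (fun _ _ f hf _ _ _ _ g sq => ?_) (MorphismProperty.universally_mono ?_)
  · exact isIso_map_of_universallyLocal c adj (MorphismProperty.of_isPullback sq.flip hf)
  · exact fun _ _ f (_ : IsIso (L.map f)) => (isLocal_singleton_obj_iff adj).2
      (ObjectProperty.isLocal_of_isIso _ _)

end FiniteProducts

theorem precohesive_dense_iff_pullbacks_pi_iso_general
    {E : Type u} [Category.{v} E] [HasFiniteLimits E] [CartesianMonoidalCategory E]
    [MonoidalClosed E] (cE : _root_.Classifier E)
    {S : Type u'} [Category.{v'} S] [CartesianMonoidalCategory S] (cS : _root_.Classifier S)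
    {pShriek : E ⥤ S} {pStar : S ⥤ E} (adj : pShriek ⊣ pStar) [PreservesFiniteProducts pShriek]
    {F : Type u₂} [Category.{v₂} F] {iF : F ⥤ E} [iF.Full] [iF.Faithful]
    {LF : E ⥤ F} {adjF : LF ⊣ iF} [PreservesFiniteLimits LF]
    (hF : IsLeastSubtoposContaining adjF (pStar.obj cS.Ω)) {U X : E} (u : U ⟶ X) [Mono u] :
    IsIso (LF.map u) ↔ ∀ {V Y : E} (v : V ⟶ Y) (a : V ⟶ U) (b : Y ⟶ X),
      IsPullback a v u b → IsIso (pShriek.map v) := by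
  rw [hF.isIso_map_iff_universallyLocal cE, universallyLocal_obj_Ω_eq cS adj]
  exact ⟨fun h V Y v a b sq => h _ _ _ sq.flip, fun h V Y a b v sq => h v a b sq.flip⟩

/-- Let `p : E ⟶ S` be a pre-cohesive geometric morphism between elementary
toposes, `2 = cS.Ω` the subobject classifier of `S`, and `F` (inclusion `iF`, reflector
`LF ⊣ iF` preserving finite limits) the least subtopos of `E` containing `p^* 2`.  A
monomorphism `u : U ⟶ X` in `E` is `F`-dense (i.e. `LF.map u` is an isomorphism) if and
only if for every pullback square with `u` on one side and `v : V ⟶ Y` as the pulled-back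
monomorphism, `p_! v` is an isomorphism in `S`. -/
theorem precohesive_dense_iff_pullbacks_pi_iso
    {E : Type u} [Category.{v} E] [HasFiniteLimits E] [CartesianMonoidalCategory E]
    [MonoidalClosed E] (cE : _root_.Classifier E)
    {S : Type u'} [Category.{v'} S] [HasFiniteLimits S] [CartesianMonoidalCategory S]
    [MonoidalClosed S] (cS : _root_.Classifier S)
    (pShriek : E ⥤ S) (pStar : S ⥤ E) (pLower : E ⥤ S) (pUpper : S ⥤ E)
    (adj₁ : pShriek ⊣ pStar) (adj₂ : pStar ⊣ pLower) (adj₃ : pLower ⊣ pUpper)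
    [PreservesFiniteLimits pStar] [pStar.Full] [pStar.Faithful]
    (hUnitMono : ∀ A : S, Mono (adj₂.unit.app A))
    (hCounitMono : ∀ X : E, Mono (adj₂.counit.app X))
    [PreservesFiniteProducts pShriek]
    {F : Type u₂} [Category.{v₂} F] (iF : F ⥤ E) [iF.Full] [iF.Faithful]
    (LF : E ⥤ F) (adjF : LF ⊣ iF) [PreservesFiniteLimits LF]
    (hZ : IsIso (adjF.unit.app (pStar.obj cS.Ω)))
    (hleast : ∀ {F' : Type u₂} [Category.{v₂} F'] (i' : F' ⥤ E), i'.Full → i'.Faithful →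
      ∀ (L' : E ⥤ F') (adj' : L' ⊣ i'), PreservesFiniteLimits L' →
      IsIso (adj'.unit.app (pStar.obj cS.Ω)) →
      ∀ X : E, IsIso (adjF.unit.app X) → IsIso (adj'.unit.app X))
    {U X : E} (u : U ⟶ X) (hu : Mono u) :
    IsIso (LF.map u) ↔
      ∀ {V Y : E} (v : V ⟶ Y) (a : V ⟶ U) (b : Y ⟶ X),
        IsPullback a v u b → IsIso (pShriek.map v) := by
  exact precohesive_dense_iff_pullbacks_pi_iso_general cE cS adj₁ ⟨hZ, hleast⟩ u
end

section
/- Let p : E → S be a pre-cohesive geometric morphism between elementary toposes, let 2 be the subobject classifier of S, and let F be the least subtopos of E containing p^* 2, with reflector L_F : E → F. If a monomorphism u : U → X in E is F-dense (i.e., L_F u is an isomorphism), then p_* u : p_* U → p_* X is an isomorphism in S. -/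
open CategoryTheory Category Limits MonoidalCategory

universe u v u' v' u₂ v₂

/-!
Every monomorphism of `E` is a pullback of `truth`, and the counit `p^* p_* ⟶ 𝟭` is an isomorphism
at the terminal object and monic at `Ω`, so its naturality square at any monomorphism `u` is a
pullback. Hence `p^* p_* u` is a pullback of `u`, and it is `F`-dense when `u` is. As `p^* 2` is
`F`-separated, two maps `p_* X ⟶ 2` agreeing on `p_* U` are equal. Thus the classifying map of
`p_* u` is the constant map `true`, which makes `p_* u` an isomorphism.
-/

section Adjunction

variable {C : Type u} [Category.{v} C] {D : Type u'} [Category.{v'} D] {L : C ⥤ D} {R : D ⥤ C}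

theorem comp_left_injective_of_epi_map_of_mono_unit_app (adj : L ⊣ R) {A B : C} (f : A ⟶ B)
    [Epi (L.map f)] (Z : C) [Mono (adj.unit.app Z)] :
    Function.Injective fun g : B ⟶ Z ↦ f ≫ g := by
  intro g h hgh
  have map_eq : L.map g = L.map h := by
    rw [← cancel_epi (L.map f), ← L.map_comp, ← L.map_comp]
    exact congrArg L.map hgh
  refine (cancel_mono (adj.unit.app Z)).mp ?_
  calc
    g ≫ adj.unit.app Z = adj.unit.app B ≫ R.map (L.map g) := (adj.unit_naturality g).symm
    _ = adj.unit.app B ≫ R.map (L.map h) := by rw [map_eq]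
    _ = h ≫ adj.unit.app Z := adj.unit_naturality h

theorem isIso_counit_app_of_isTerminal (adj : L ⊣ R) [PreservesLimit (Functor.empty.{0} C) L]
    {T : D} (hT : IsTerminal T) : IsIso (adj.counit.app T) :=
  have : PreservesLimitsOfSize.{0, 0} R := adj.rightAdjoint_preservesLimits
  isIso_of_isTerminal ((hT.isTerminalObj R).isTerminalObj L) hT _

end Adjunction

namespace Classifier

open CartesianMonoidalCategory

variable {E : Type u} [Category.{v} E] [CartesianMonoidalCategory E]

theorem isIso_of_comp_left_injective (c : _root_.Classifier E) {U X : E} (m : U ⟶ X) [Mono m]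
    (hm : Function.Injective fun χ : X ⟶ c.Ω ↦ m ≫ χ) : IsIso m := by
  obtain ⟨χ, hχ, -⟩ := c.classifies m inferInstance
  have χ_eq_true : χ = toUnit X ≫ c.truth := hm <| by
    simp only [← hχ.w, ← Category.assoc, comp_toUnit]
  have : IsSplitEpi m :=
    .mk' ⟨hχ.lift (toUnit X) (𝟙 X) (by rw [χ_eq_true, Category.id_comp]), hχ.lift_snd _ _ _⟩
  exact isIso_of_mono_of_isSplitEpi m

theorem isPullback_naturality (c : _root_.Classifier E) {D : Type u'} [Category.{v'} D]
    {G H : E ⥤ D} [PreservesLimitsOfShape WalkingCospan G] [PreservesLimitsOfShape WalkingCospan H]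
    (α : G ⟶ H) [IsIso (α.app (𝟙_ E))] [Mono (α.app c.Ω)] {U X : E} (m : U ⟶ X) [Mono m] :
    IsPullback (G.map m) (α.app U) (α.app X) (H.map m) := by
  obtain ⟨χ, hχ, -⟩ := c.classifies m inferInstance
  have truth_square :
      IsPullback (G.map c.truth) (α.app (𝟙_ E)) (α.app c.Ω) (H.map c.truth) :=
    .of_vert_isIso_mono ⟨α.naturality c.truth⟩
  have pasted := (hχ.map G).flip.paste_vert truth_square
  rw [α.naturality, α.naturality] at pasted
  exact .of_bot pasted (α.naturality m) (hχ.map H).flip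

theorem isPullback_counit (c : _root_.Classifier E) {S : Type u'} [Category.{v'} S]
    {L : S ⥤ E} {R : E ⥤ S} (adj : L ⊣ R) [PreservesFiniteLimits L]
    [Mono (adj.counit.app c.Ω)] {U X : E} (m : U ⟶ X) [Mono m] :
    IsPullback (L.map (R.map m)) (adj.counit.app U) (adj.counit.app X) m :=
  have : PreservesLimitsOfSize.{0, 0} R := adj.rightAdjoint_preservesLimits
  have := isIso_counit_app_of_isTerminal adj (isTerminalTensorUnit (C := E))
  c.isPullback_naturality adj.counit m

end Classifier

theorem precohesive_dense_implies_pLower_iso_general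
    {E : Type u} [Category.{v} E] [CartesianMonoidalCategory E] (cE : _root_.Classifier E)
    {S : Type u'} [Category.{v'} S] [CartesianMonoidalCategory S] (cS : _root_.Classifier S)
    {pStar : S ⥤ E} {pLower : E ⥤ S} (adj : pStar ⊣ pLower) [PreservesFiniteLimits pStar]
    [Mono (adj.unit.app cS.Ω)] [Mono (adj.counit.app cE.Ω)]
    {F : Type u₂} [Category.{v₂} F] {iF : F ⥤ E} {LF : E ⥤ F} (adjF : LF ⊣ iF)
    [PreservesLimitsOfShape WalkingCospan LF] [Mono (adjF.unit.app (pStar.obj cS.Ω))]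
    {U X : E} (u : U ⟶ X) [Mono u] [IsIso (LF.map u)] :
    IsIso (pLower.map u) := by
  have : PreservesLimitsOfSize.{0, 0} pLower := adj.rightAdjoint_preservesLimits
  have dense : IsIso ((pStar ⋙ LF).map (pLower.map u)) :=
    ((cE.isPullback_counit adj u).map LF).isIso_fst_of_isIso
  have separated : Mono ((adj.comp adjF).unit.app cS.Ω) := by
    rw [Adjunction.comp_unit_app]
    infer_instance
  exact cS.isIso_of_comp_left_injective (pLower.map u)
    (comp_left_injective_of_epi_map_of_mono_unit_app (adj.comp adjF) _ _)

/-- Let `p : E ⟶ S` be a pre-cohesive geometric morphism between elementary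
toposes, `2 = cS.Ω` the subobject classifier of `S`, and `F` (inclusion `iF`, reflector
`LF ⊣ iF` preserving finite limits) the least subtopos of `E` containing `p^* 2`.  If a
monomorphism `u : U ⟶ X` in `E` is `F`-dense (i.e. `LF.map u` is an isomorphism), then
`p_* u : p_* U ⟶ p_* X` is an isomorphism in `S`. -/
theorem precohesive_dense_implies_pLower_iso
    {E : Type u} [Category.{v} E] [HasFiniteLimits E] [CartesianMonoidalCategory E]
    [MonoidalClosed E] (cE : _root_.Classifier E)
    {S : Type u'} [Category.{v'} S] [HasFiniteLimits S] [CartesianMonoidalCategory S]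
    [MonoidalClosed S] (cS : _root_.Classifier S)
    (pShriek : E ⥤ S) (pStar : S ⥤ E) (pLower : E ⥤ S) (pUpper : S ⥤ E)
    (adj₁ : pShriek ⊣ pStar) (adj₂ : pStar ⊣ pLower) (adj₃ : pLower ⊣ pUpper)
    [PreservesFiniteLimits pStar] [pStar.Full] [pStar.Faithful]
    (hUnitMono : ∀ A : S, Mono (adj₂.unit.app A))
    (hCounitMono : ∀ X : E, Mono (adj₂.counit.app X))
    [PreservesFiniteProducts pShriek]
    {F : Type u₂} [Category.{v₂} F] (iF : F ⥤ E) [iF.Full] [iF.Faithful]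
    (LF : E ⥤ F) (adjF : LF ⊣ iF) [PreservesFiniteLimits LF]
    (hZ : IsIso (adjF.unit.app (pStar.obj cS.Ω)))
    (hleast : ∀ {F' : Type u₂} [Category.{v₂} F'] (i' : F' ⥤ E), i'.Full → i'.Faithful →
      ∀ (L' : E ⥤ F') (adj' : L' ⊣ i'), PreservesFiniteLimits L' →
      IsIso (adj'.unit.app (pStar.obj cS.Ω)) →
      ∀ X : E, IsIso (adjF.unit.app X) → IsIso (adj'.unit.app X))
    {U X : E} (u : U ⟶ X) (hu : Mono u) (hdense : IsIso (LF.map u)) :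
    IsIso (pLower.map u) := by
  have := hUnitMono cS.Ω
  have := hCounitMono cE.Ω
  exact precohesive_dense_implies_pLower_iso_general cE cS adj₂ adjF u
end
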